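/- Let n ≥ 1, let 1 ≤ p, q ≤ ∞, s > 0, β > 0, and choose 1 ≤ p₃, p₄, q₃, q₄ ≤ ∞ with 1/p = 1/p₃ + 1/p₄ and 1/q = 1/q₃ + 1/q₄. Then there exists a constant C > 0, depending only on n, s, β and these indices, such that for all Schwartz functions f₁, f₂ on ℝⁿ the para-product series T_{f₁} f₂ = Σ_{k∈ℤ} (Δ_k f₂)(S_{k−1} f₁) converges in the space of tempered distributions and satisfies ‖Σ_{k∈ℤ} (Δ_k f₂)(S_{k−1} f₁)‖_{Ḃ^s_{p,q}} ≤ C ‖f₁‖_{Ḃ^{-β}_{p₃,q₃}} ‖f₂‖_{Ḃ^{s+β}_{p₄,q₄}} in [0,∞]. -/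

import Mathlib

open MeasureTheory Real Complex Filter Function
open scoped ENNReal FourierTransform SchwartzMap

noncomputable section

/-- The properties of the radial smooth cutoff `χ` used to build the
Littlewood–Paley decomposition: smooth, compactly supported, radial,
`0 ≤ χ ≤ 1`, `χ = 1` on `{‖ξ‖ ≤ 3/4}` and `χ = 0` on `{‖ξ‖ > 4/3}`. -/
def IsLPCutoff {n : ℕ} (χ : EuclideanSpace ℝ (Fin n) → ℝ) : Prop :=
  ContDiff ℝ ((⊤ : ℕ∞) : WithTop ℕ∞) χ ∧ HasCompactSupport χ ∧
    (∀ ξ η, ‖ξ‖ = ‖η‖ → χ ξ = χ η) ∧ (∀ ξ, 0 ≤ χ ξ) ∧ (∀ ξ, χ ξ ≤ 1) ∧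
    (∀ ξ, ‖ξ‖ ≤ 3 / 4 → χ ξ = 1) ∧ (∀ ξ, 4 / 3 < ‖ξ‖ → χ ξ = 0)

/-- The low-frequency Littlewood–Paley projection `S_j f = 𝓕⁻¹(χ(·/2^j) 𝓕 f)`. -/
def Sproj {n : ℕ} (χ : EuclideanSpace ℝ (Fin n) → ℝ) (j : ℤ)
    (f : EuclideanSpace ℝ (Fin n) → ℂ) : EuclideanSpace ℝ (Fin n) → ℂ :=
  𝓕⁻ fun ξ => ((χ ((2 : ℝ) ^ (-j) • ξ) : ℝ) : ℂ) * 𝓕 f ξ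

/-- The Littlewood–Paley block `Δ_j f = 𝓕⁻¹(φ̂(·/2^j) 𝓕 f)`, where
`φ̂(ξ) = χ(ξ/2) - χ(ξ)`, i.e. `φ̂(ξ/2^j) = χ(ξ/2^(j+1)) - χ(ξ/2^j)`. -/
def Dproj {n : ℕ} (χ : EuclideanSpace ℝ (Fin n) → ℝ) (j : ℤ)
    (f : EuclideanSpace ℝ (Fin n) → ℂ) : EuclideanSpace ℝ (Fin n) → ℂ :=
  𝓕⁻ fun ξ => ((χ ((2 : ℝ) ^ (-(j + 1)) • ξ) - χ ((2 : ℝ) ^ (-j) • ξ) : ℝ) : ℂ) * 𝓕 f ξ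

/-- The `ℓ^q(ℤ)` norm of a sequence of extended nonnegative reals, with the usual
supremum modification for `q = ∞`. -/
def lqNorm (q : ℝ≥0∞) (a : ℤ → ℝ≥0∞) : ℝ≥0∞ :=
  if q = ∞ then ⨆ j, a j else (∑' j, a j ^ q.toReal) ^ (1 / q.toReal)

/-- The homogeneous Besov norm `‖f‖_{Ḃ^s_{p,q}}`, valued in `[0,∞]`. -/
def besovNorm {n : ℕ} (χ : EuclideanSpace ℝ (Fin n) → ℝ) (s : ℝ) (p q : ℝ≥0∞)
    (f : EuclideanSpace ℝ (Fin n) → ℂ) : ℝ≥0∞ :=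
  lqNorm q fun j => (2 : ℝ≥0∞) ^ ((j : ℝ) * s) * eLpNorm (Dproj χ j f) p volume

/-!
Since `S_{k-1} f₁` lives on `‖ξ‖ ≤ 4/3 · 2^(k-1)` and `Δ_k f₂` on `3/4 · 2^k ≤ ‖ξ‖ ≤ 8/3 · 2^k`,
the spectrum of `(Δ_k f₂)(S_{k-1} f₁)` stays at distance comparable to `2^k` from the origin, so
each block `Δ_j` of the paraproduct sees only the terms with `|j - k| ≤ 6`. To let `Δ_j` act term by
term it suffices that the series converges absolutely in `L¹`; this holds because `𝓕 f₂ ∈ L¹` and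
the symbols of the `Δ_k` overlap boundedly, so that `Σ_k ‖Δ_k f₂‖_∞ < ∞`.

The kernels of the `Δ_j` are dilates of one another, hence have the same `L¹` norm, and Young's
inequality bounds `Δ_j` on `L^p` uniformly in `j`. With Hölder's inequality in `L^p` and in `ℓ^q`
this leaves the estimate of `2^(-kβ) ‖S_{k-1} f₁‖_{p₃}` in `ℓ^{q₃}`. Expanding
`S_{k-1} f₁ = Σ_{m ≥ 0} Δ_{k-2-m} f₁` turns that sequence into a superposition of shifts of
`2^(-kβ) ‖Δ_k f₁‖_{p₃}` with the weights `2^(-(m+2)β)`, which are summable as `β > 0`, and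
Minkowski's inequality concludes.
-/

open scoped Convolution Pointwise

section Minkowski

variable {X Y : Type*} [MeasurableSpace X] [MeasurableSpace Y]

theorem rpow_lintegral_le {ν : Measure Y} {f : Y → ℝ≥0∞} (hf : AEMeasurable f ν) {r : ℝ}
    (hr : 1 ≤ r) : (∫⁻ y, f y ∂ν) ^ r ≤ ν Set.univ ^ (r - 1) * ∫⁻ y, f y ^ r ∂ν := by
  have hr0 : 0 < r := zero_lt_one.trans_le hr
  have holder : ∫⁻ y, f y ∂ν ≤ ν Set.univ ^ (1 - r⁻¹) * (∫⁻ y, f y ^ r ∂ν) ^ r⁻¹ := by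
    simpa [ENNReal.rpow_rpow_inv hr0.ne'] using
      ENNReal.lintegral_mul_norm_pow_le (μ := ν) (f := 1) (g := fun y => f y ^ r)
        aemeasurable_const (hf.pow_const r) (sub_nonneg.2 (inv_le_one_of_one_le₀ hr))
        (inv_nonneg.2 hr0.le) (sub_add_cancel _ _)
  calc (∫⁻ y, f y ∂ν) ^ r
      ≤ (ν Set.univ ^ (1 - r⁻¹) * (∫⁻ y, f y ^ r ∂ν) ^ r⁻¹) ^ r := by gcongr
    _ = ν Set.univ ^ (r - 1) * ∫⁻ y, f y ^ r ∂ν := by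
      rw [ENNReal.mul_rpow_of_nonneg _ _ hr0.le, ← ENNReal.rpow_mul,
        ENNReal.rpow_inv_rpow hr0.ne', sub_mul, inv_mul_cancel₀ hr0.ne', one_mul]

variable {μ : Measure X} {ν : Measure Y} [SFinite μ] [SFinite ν] {g : X → Y → ℝ≥0∞} {A : ℝ≥0∞}

theorem eLpNormEssSup_lintegral_le (hg : Measurable (uncurry g))
    (hA : ∀ y, eLpNormEssSup (fun x => g x y) μ ≤ A) :
    eLpNormEssSup (fun x => ∫⁻ y, g x y ∂ν) μ ≤ ν Set.univ * A := by
  have hae : ∀ᵐ x ∂μ, ∀ᵐ y ∂ν, g x y ≤ A := by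
    rw [Measure.ae_ae_comm (p := fun x y => g x y ≤ A) (measurableSet_le hg measurable_const)]
    exact .of_forall fun y => (ae_le_essSup (f := fun x => g x y)).mono fun x hx => hx.trans (hA y)
  refine essSup_le_of_ae_le _ (hae.mono fun x hx => ?_)
  calc ∫⁻ y, g x y ∂ν ≤ ∫⁻ _, A ∂ν := lintegral_mono_ae hx
    _ = ν Set.univ * A := by rw [lintegral_const, mul_comm]

theorem lintegral_rpow_lintegral_le (hg : Measurable (uncurry g)) {r : ℝ} (hr : 1 ≤ r)
    (hA : ∀ y, ∫⁻ x, g x y ^ r ∂μ ≤ A) :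
    ∫⁻ x, (∫⁻ y, g x y ∂ν) ^ r ∂μ ≤ ν Set.univ ^ r * A := by
  have hgr : Measurable fun z : X × Y => g z.1 z.2 ^ r := hg.pow_const r
  calc ∫⁻ x, (∫⁻ y, g x y ∂ν) ^ r ∂μ
      ≤ ∫⁻ x, ν Set.univ ^ (r - 1) * ∫⁻ y, g x y ^ r ∂ν ∂μ :=
        lintegral_mono fun x => rpow_lintegral_le hg.of_uncurry_left.aemeasurable hr
    _ = ν Set.univ ^ (r - 1) * ∫⁻ y, ∫⁻ x, g x y ^ r ∂μ ∂ν := by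
        rw [lintegral_const_mul _ hgr.lintegral_prod_right,
          lintegral_lintegral_swap hgr.aemeasurable]
    _ ≤ ν Set.univ ^ (r - 1) * ∫⁻ _, A ∂ν := by gcongr with y; exact hA y
    _ = ν Set.univ ^ r * A := by
        rw [lintegral_const, mul_comm A, ← mul_assoc]
        nth_rw 2 [← ENNReal.rpow_one (ν Set.univ)]
        rw [← ENNReal.rpow_add_of_nonneg _ _ (sub_nonneg.2 hr) zero_le_one, sub_add_cancel]

theorem eLpNorm_lintegral_le (hg : Measurable (uncurry g)) {p : ℝ≥0∞} (hp : 1 ≤ p)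
    (hA : ∀ y, eLpNorm (fun x => g x y) p μ ≤ A) :
    eLpNorm (fun x => ∫⁻ y, g x y ∂ν) p μ ≤ ν Set.univ * A := by
  rcases eq_or_ne p ∞ with rfl | hp_top
  · simp only [eLpNorm_exponent_top] at hA ⊢
    exact eLpNormEssSup_lintegral_le hg hA
  · have hp0 : p ≠ 0 := (zero_lt_one.trans_le hp).ne'
    have hr : 0 < p.toReal := ENNReal.toReal_pos hp0 hp_top
    simp only [eLpNorm_eq_lintegral_rpow_enorm_toReal hp0 hp_top, enorm_eq_self, one_div,
      ENNReal.rpow_inv_le_iff hr, ENNReal.mul_rpow_of_nonneg _ _ hr.le] at hA ⊢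
    exact lintegral_rpow_lintegral_le hg (by simpa using ENNReal.toReal_mono hp_top hp) hA

end Minkowski

section SequenceNorms

theorem lqNorm_eq_eLpNorm_count {q : ℝ≥0∞} (hq : q ≠ 0) (a : ℤ → ℝ≥0∞) :
    lqNorm q a = eLpNorm a q Measure.count := by
  unfold lqNorm
  split_ifs with h
  · subst h
    simp [eLpNormEssSup]
  · simp [eLpNorm_eq_lintegral_rpow_enorm_toReal hq h, lintegral_count]

theorem lqNorm_mono {q : ℝ≥0∞} {a b : ℤ → ℝ≥0∞} (h : ∀ j, a j ≤ b j) :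
    lqNorm q a ≤ lqNorm q b := by
  unfold lqNorm
  split_ifs
  · exact iSup_mono h
  · gcongr with j
    exact h j

theorem lqNorm_comp_sub_right (q : ℝ≥0∞) (a : ℤ → ℝ≥0∞) (l : ℤ) :
    lqNorm q (fun j => a (j - l)) = lqNorm q a := by
  unfold lqNorm
  split_ifs
  · exact (Equiv.subRight l).iSup_comp (g := a)
  · exact congrArg (· ^ _) ((Equiv.subRight l).tsum_eq fun j => a j ^ q.toReal)

theorem lqNorm_const_mul {q : ℝ≥0∞} (hq : q ≠ 0) (c : ℝ≥0∞) (a : ℤ → ℝ≥0∞) :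
    lqNorm q (fun j => c * a j) = c * lqNorm q a := by
  unfold lqNorm
  split_ifs with h
  · rw [ENNReal.mul_iSup]
  · have hr : 0 < q.toReal := ENNReal.toReal_pos hq h
    simp_rw [ENNReal.mul_rpow_of_nonneg _ _ hr.le, ENNReal.tsum_mul_left]
    rw [ENNReal.mul_rpow_of_nonneg _ _ (by positivity), ← ENNReal.rpow_mul,
      mul_one_div_cancel hr.ne', ENNReal.rpow_one]

theorem lqNorm_tsum_mul_shift_le {ι : Type*} [Countable ι] {q : ℝ≥0∞} (hq : 1 ≤ q)
    (w : ι → ℝ≥0∞) (σ : ι → ℤ) (a : ℤ → ℝ≥0∞) :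
    lqNorm q (fun k => ∑' i, w i * a (k - σ i)) ≤ (∑' i, w i) * lqNorm q a := by
  let _ : MeasurableSpace ι := ⊤
  have hq0 : q ≠ 0 := (zero_lt_one.trans_le hq).ne'
  have minkowski := eLpNorm_lintegral_le (μ := (Measure.count : Measure ℤ))
    (ν := (Measure.count : Measure ι).withDensity w) (g := fun k i => a (k - σ i)) .of_discrete hq
    fun i => by rw [← lqNorm_eq_eLpNorm_count hq0, lqNorm_comp_sub_right]
  simpa only [lintegral_withDensity_eq_lintegral_mul _ (measurable_of_countable w)
    (measurable_of_countable _), withDensity_apply _ MeasurableSet.univ, Measure.restrict_univ,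
    Pi.mul_apply, lintegral_count, ← lqNorm_eq_eLpNorm_count hq0] using minkowski

theorem lqNorm_mul_le_lqNorm_top_mul {q : ℝ≥0∞} (hq : q ≠ 0) (a b : ℤ → ℝ≥0∞) :
    lqNorm q (fun j => a j * b j) ≤ lqNorm ∞ a * lqNorm q b := by
  rw [← lqNorm_const_mul hq]
  refine lqNorm_mono fun j => ?_
  gcongr
  simpa [lqNorm] using le_iSup a j

theorem lqNorm_mul_le {q r t : ℝ≥0∞} [holder : ENNReal.HolderTriple r t q] (hq : q ≠ 0)
    (a b : ℤ → ℝ≥0∞) : lqNorm q (fun j => a j * b j) ≤ lqNorm r a * lqNorm t b := by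
  have hqrt := holder.one_div_eq
  obtain rfl | rfl | hr := ENNReal.trichotomy r
  · simp_all
  · obtain rfl : q = t := by simpa using hqrt
    exact lqNorm_mul_le_lqNorm_top_mul hq a b
  obtain rfl | rfl | ht := ENNReal.trichotomy t
  · simp_all
  · obtain rfl : q = r := by simpa using hqrt
    simpa only [mul_comm] using lqNorm_mul_le_lqNorm_top_mul hq b a
  obtain ⟨hr_pos, hr_top⟩ := ENNReal.toReal_pos_iff.1 hr
  obtain ⟨ht_pos, ht_top⟩ := ENNReal.toReal_pos_iff.1 ht
  have hqrt' : 1 / q.toReal = 1 / r.toReal + 1 / t.toReal := by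
    simpa [ENNReal.toReal_add, hr_pos.ne', ht_pos.ne'] using congrArg ENNReal.toReal hqrt
  have hq_pos : 0 < q.toReal := one_div_pos.1 (by rw [hqrt']; positivity)
  have hq_top : q ≠ ∞ := (ENNReal.toReal_pos_iff.1 hq_pos).2.ne
  have hqr : q.toReal < r.toReal :=
    lt_of_one_div_lt_one_div hr (hqrt' ▸ lt_add_of_pos_right _ (by positivity))
  simpa [lqNorm, hq_top, hr_top.ne, ht_top.ne, lintegral_count] using
    ENNReal.lintegral_Lp_mul_le_Lq_mul_Lr hq_pos hqr hqrt' (Measure.count : Measure ℤ)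
      (measurable_of_countable a).aemeasurable (measurable_of_countable b).aemeasurable

end SequenceNorms

section YoungInequality

variable {𝕜 G E E' F : Type*} [NontriviallyNormedField 𝕜] [AddGroup G] [MeasurableSpace G]
  [MeasurableAdd₂ G] [MeasurableNeg G] {μ : Measure G} [SFinite μ] [μ.IsAddRightInvariant]
  [NormedAddCommGroup E] [NormedSpace 𝕜 E] [NormedAddCommGroup E'] [NormedSpace 𝕜 E']
  [NormedAddCommGroup F] [NormedSpace 𝕜 F] [NormedSpace ℝ F]

theorem eLpNorm_convolution_le (L : E →L[𝕜] E' →L[𝕜] F) {f : G → E} {g : G → E'}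
    (hf : StronglyMeasurable f) (hg : StronglyMeasurable g) {p : ℝ≥0∞} (hp : 1 ≤ p) :
    eLpNorm (f ⋆[L, μ] g) p μ ≤ ‖L‖ₑ * eLpNorm f 1 μ * eLpNorm g p μ := by
  have translate (y : G) : eLpNorm (fun x => ‖g (x - y)‖ₑ) p μ ≤ eLpNorm g p μ := by
    rw [eLpNorm_enorm]
    exact (eLpNorm_comp_measurePreserving hg.aestronglyMeasurable
      (measurePreserving_sub_right μ y)).le
  have pointwise (x : G) :
      ‖(f ⋆[L, μ] g) x‖ₑ ≤ ∫⁻ y, ‖g (x - y)‖ₑ ∂μ.withDensity fun y => ‖L‖ₑ * ‖f y‖ₑ := by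
    have hgx : Measurable fun y => ‖g (x - y)‖ₑ := hg.enorm.comp (measurable_id.const_sub x)
    rw [lintegral_withDensity_eq_lintegral_mul _ (hf.enorm.const_mul _) hgx]
    refine (enorm_integral_le_lintegral_enorm _).trans (lintegral_mono fun y => ?_)
    simp only [Pi.mul_apply, enorm_eq_nnnorm]
    exact_mod_cast L.le_opNorm₂ (f y) (g (x - y))
  calc eLpNorm (f ⋆[L, μ] g) p μ
      ≤ eLpNorm (fun x => ∫⁻ y, ‖g (x - y)‖ₑ ∂μ.withDensity fun y => ‖L‖ₑ * ‖f y‖ₑ) p μ :=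
        eLpNorm_mono_enorm pointwise
    _ ≤ (μ.withDensity fun y => ‖L‖ₑ * ‖f y‖ₑ) Set.univ * eLpNorm g p μ :=
        eLpNorm_lintegral_le (g := fun x y => ‖g (x - y)‖ₑ)
          (hg.enorm.comp (measurable_fst.sub measurable_snd)) hp translate
    _ = ‖L‖ₑ * eLpNorm f 1 μ * eLpNorm g p μ := by
        rw [withDensity_apply _ MeasurableSet.univ, Measure.restrict_univ,
          lintegral_const_mul _ hf.enorm, eLpNorm_one_eq_lintegral_enorm]

end YoungInequality

section FourierMultipliers

variable {V E : Type*} [NormedAddCommGroup V] [InnerProductSpace ℝ V] [FiniteDimensional ℝ V]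
  [MeasurableSpace V] [BorelSpace V] [NormedAddCommGroup E] [NormedSpace ℂ E]

theorem enorm_fourierInv_le (u : V → E) (x : V) : ‖𝓕⁻ u x‖ₑ ≤ eLpNorm u 1 volume := by
  rw [Real.fourierInv_eq, eLpNorm_one_eq_lintegral_enorm]
  refine (enorm_integral_le_lintegral_enorm _).trans_eq (lintegral_congr fun ξ => ?_)
  rw [← ofReal_norm, Circle.norm_smul, ofReal_norm]

theorem fourier_tsum {ι : Type*} [Countable ι] {u : ι → V → E}
    (hu : ∀ i, AEStronglyMeasurable (u i)) (hsum : ∑' i, eLpNorm (u i) 1 volume ≠ ∞) (ξ : V) :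
    𝓕 (fun x => ∑' i, u i x) ξ = ∑' i, 𝓕 (u i) ξ := by
  simp only [Real.fourier_eq, ← tsum_const_smul']
  refine integral_tsum (fun i => ?_) ?_
  · exact (Continuous.aestronglyMeasurable (by fun_prop)).smul (hu i)
  · simpa [← ofReal_norm, Circle.norm_smul, eLpNorm_one_eq_lintegral_enorm] using hsum

theorem fourierInv_comp_smul (u : V → E) {r : ℝ} (hr : 0 < r) (x : V) :
    𝓕⁻ (fun ξ => u (r • ξ)) x = (r ^ Module.finrank ℝ V)⁻¹ • 𝓕⁻ u (r⁻¹ • x) := by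
  rw [Real.fourierInv_eq, Real.fourierInv_eq, ← abs_of_pos (inv_pos.2 (pow_pos hr _)),
    ← Measure.integral_comp_smul]
  simp only [inner_smul_left, inner_smul_right, conj_trivial, inv_mul_cancel_left₀ hr.ne']

theorem eLpNorm_one_fourierInv_comp_smul (u : V → E) {r : ℝ} (hr : 0 < r) :
    eLpNorm (𝓕⁻ fun ξ => u (r • ξ)) 1 volume = eLpNorm (𝓕⁻ u) 1 volume := by
  have hr' : r⁻¹ ≠ 0 := inv_ne_zero hr.ne'
  have hrd : 0 < r ^ Module.finrank ℝ V := pow_pos hr _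
  calc eLpNorm (𝓕⁻ fun ξ => u (r • ξ)) 1 volume
      = eLpNorm ((r ^ Module.finrank ℝ V)⁻¹ • (𝓕⁻ u ∘ (r⁻¹ • ·))) 1 volume := by
        congr 1 with x
        exact fourierInv_comp_smul u hr x
    _ = eLpNorm (𝓕⁻ u) 1 volume := by
        rw [eLpNorm_const_smul, ← (measurableEmbedding_const_smul₀ hr').eLpNorm_map_measure,
          Measure.map_addHaar_smul volume hr', eLpNorm_one_smul_measure, ← mul_assoc,
          Real.enorm_of_nonneg (inv_pos.2 hrd).le, ← ENNReal.ofReal_mul (inv_pos.2 hrd).le, inv_pow,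
          inv_inv, abs_of_pos hrd, inv_mul_cancel₀ hrd.ne', ENNReal.ofReal_one, one_mul]

theorem integrable_fourier (f : 𝓢(V, E)) : Integrable (𝓕 ⇑f) := by
  rw [← SchwartzMap.fourier_coe]
  exact (𝓕 f).integrable

theorem integrable_fourierInv (f : 𝓢(V, E)) : Integrable (𝓕⁻ ⇑f) := by
  rw [← SchwartzMap.fourierInv_coe]
  exact (𝓕⁻ f).integrable

theorem coe_fourierMultiplierCLM (m : 𝓢(V, ℂ)) (f : 𝓢(V, E)) :
    ⇑(SchwartzMap.fourierMultiplierCLM E m f) = 𝓕⁻ fun ξ => m ξ • 𝓕 (⇑f) ξ := by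
  rw [SchwartzMap.fourierMultiplierCLM_apply, SchwartzMap.fourierInv_coe]
  congr 1 with ξ
  rw [SchwartzMap.smulLeftCLM_apply_apply m.hasTemperateGrowth, SchwartzMap.fourier_coe]

theorem fourierMultiplierCLM_sub (m₁ m₂ : 𝓢(V, ℂ)) (f : 𝓢(V, E)) :
    SchwartzMap.fourierMultiplierCLM E ⇑(m₁ - m₂) f
      = SchwartzMap.fourierMultiplierCLM E m₁ f - SchwartzMap.fourierMultiplierCLM E m₂ f := by
  have hcoe : ⇑(m₁ - m₂) = ⇑m₁ - ⇑m₂ := rfl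
  simp only [SchwartzMap.fourierMultiplierCLM_apply, hcoe, SchwartzMap.smulLeftCLM_sub
    m₁.hasTemperateGrowth m₂.hasTemperateGrowth, sub_apply]
  exact map_sub (FourierTransform.fourierInvₗ ℂ 𝓢(V, E)) _ _

theorem fourierMultiplierCLM_eq_convolution (m : 𝓢(V, ℂ)) (f : 𝓢(V, E)) :
    SchwartzMap.fourierMultiplierCLM E m f
      = SchwartzMap.convolution (ContinuousLinearMap.lsmul ℂ ℂ) (𝓕⁻ m) f := by
  have hsmul : SchwartzMap.smulLeftCLM E m (𝓕 f)
      = SchwartzMap.pairing (ContinuousLinearMap.lsmul ℂ ℂ) m (𝓕 f) := by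
    ext ξ
    simp [SchwartzMap.smulLeftCLM_apply_apply m.hasTemperateGrowth]
  simp [SchwartzMap.convolution, SchwartzMap.fourierMultiplierCLM_apply, hsmul]

variable [CompleteSpace E]

theorem fourier_fourierMultiplierCLM (m : 𝓢(V, ℂ)) (f : 𝓢(V, E)) (ξ : V) :
    𝓕 ⇑(SchwartzMap.fourierMultiplierCLM E m f) ξ = m ξ • 𝓕 (⇑f) ξ := by
  rw [← SchwartzMap.fourier_coe, SchwartzMap.fourierMultiplierCLM_apply,
    FourierTransform.fourier_fourierInv_eq,
    SchwartzMap.smulLeftCLM_apply_apply m.hasTemperateGrowth, SchwartzMap.fourier_coe]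

theorem eLpNorm_fourierMultiplierCLM_le (m : 𝓢(V, ℂ)) (f : 𝓢(V, E)) {p : ℝ≥0∞} (hp : 1 ≤ p) :
    eLpNorm (SchwartzMap.fourierMultiplierCLM E m f) p volume
      ≤ eLpNorm (𝓕⁻ ⇑m) 1 volume * eLpNorm f p volume := by
  have hconv : ⇑(SchwartzMap.fourierMultiplierCLM E m f)
      = 𝓕⁻ ⇑m ⋆[ContinuousLinearMap.lsmul ℂ ℂ, volume] ⇑f := by
    ext x
    rw [fourierMultiplierCLM_eq_convolution, SchwartzMap.convolution_apply,
      SchwartzMap.fourierInv_coe]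
  have hkernel : StronglyMeasurable (𝓕⁻ ⇑m) := by
    rw [← SchwartzMap.fourierInv_coe]
    exact (𝓕⁻ m).continuous.stronglyMeasurable
  have hnorm : ‖(ContinuousLinearMap.lsmul ℂ ℂ : ℂ →L[ℂ] E →L[ℂ] E)‖ₑ ≤ 1 := by
    simpa [← ofReal_norm] using ContinuousLinearMap.opNorm_lsmul_le (𝕜 := ℂ) (R := ℂ) (E := E)
  rw [hconv]
  refine (eLpNorm_convolution_le _ hkernel f.continuous.stronglyMeasurable hp).trans ?_
  gcongr
  exact mul_le_of_le_one_left' hnorm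

theorem support_fourier_pairing_subset {E₁ E₂ : Type*} [NormedAddCommGroup E₁] [NormedSpace ℂ E₁]
    [NormedAddCommGroup E₂] [NormedSpace ℂ E₂] [CompleteSpace E₁] [CompleteSpace E₂]
    (B : E₁ →L[ℂ] E₂ →L[ℂ] E) (f : 𝓢(V, E₁)) (g : 𝓢(V, E₂)) :
    support (𝓕 ⇑(SchwartzMap.pairing B f g)) ⊆ support (𝓕 ⇑f) + support (𝓕 ⇑g) := by
  have hpairing : 𝓕⁻ (SchwartzMap.pairing B f g) = SchwartzMap.convolution B (𝓕⁻ f) (𝓕⁻ g) := by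
    simp [SchwartzMap.convolution]
  intro ξ hξ
  have hconv : -ξ ∈ support (𝓕⁻ ⇑f ⋆[B] 𝓕⁻ ⇑g) := by
    rwa [mem_support, ← SchwartzMap.fourierInv_coe, ← SchwartzMap.fourierInv_coe,
      ← SchwartzMap.convolution_apply, ← hpairing, SchwartzMap.fourierInv_coe,
      Real.fourierInv_eq_fourier_neg, neg_neg]
  obtain ⟨a, ha, b, hb, hab : a + b = -ξ⟩ := support_convolution_subset B hconv
  have hξ_eq : -a + -b = ξ := by rw [← neg_add, hab, neg_neg]
  refine ⟨-a, ?_, -b, ?_, hξ_eq⟩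
  · rwa [mem_support, ← Real.fourierInv_eq_fourier_neg]
  · rwa [mem_support, ← Real.fourierInv_eq_fourier_neg]

end FourierMultipliers

section DyadicAnnuli

variable {V : Type*} [NormedAddCommGroup V]

/-- The closed dyadic annulus `2^(k-d) ≤ ‖ξ‖ ≤ 2^(k+d)`, of generation `k` and logarithmic
half-width `d`, in which a function of frequency about `2^k` has its spectrum. -/
def dyadicAnnulus (V : Type*) [NormedAddCommGroup V] (d k : ℤ) : Set V :=
  {ξ | (2 : ℝ) ^ (k - d) ≤ ‖ξ‖ ∧ ‖ξ‖ ≤ 2 ^ (k + d)}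

theorem mem_Icc_of_mem_dyadicAnnulus {d e j k : ℤ} {ξ : V} (hj : ξ ∈ dyadicAnnulus V d j)
    (hk : ξ ∈ dyadicAnnulus V e k) : k ∈ Finset.Icc (j - (d + e)) (j + (d + e)) := by
  have hjk := (zpow_le_zpow_iff_right₀ (one_lt_two (α := ℝ))).1 (hj.1.trans hk.2)
  have hkj := (zpow_le_zpow_iff_right₀ (one_lt_two (α := ℝ))).1 (hk.1.trans hj.2)
  rw [Finset.mem_Icc]
  omega

end DyadicAnnuli

section Cutoffs

variable {n : ℕ} {χ : EuclideanSpace ℝ (Fin n) → ℝ}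

namespace IsLPCutoff

theorem nonneg (hχ : IsLPCutoff χ) (ξ : EuclideanSpace ℝ (Fin n)) : 0 ≤ χ ξ :=
  hχ.2.2.2.1 ξ

theorem le_one (hχ : IsLPCutoff χ) (ξ : EuclideanSpace ℝ (Fin n)) : χ ξ ≤ 1 :=
  hχ.2.2.2.2.1 ξ

theorem eq_one (hχ : IsLPCutoff χ) {ξ : EuclideanSpace ℝ (Fin n)} (hξ : ‖ξ‖ ≤ 3 / 4) : χ ξ = 1 :=
  hχ.2.2.2.2.2.1 ξ hξ

theorem eq_zero (hχ : IsLPCutoff χ) {ξ : EuclideanSpace ℝ (Fin n)} (hξ : 4 / 3 < ‖ξ‖) : χ ξ = 0 :=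
  hχ.2.2.2.2.2.2 ξ hξ

/-- The symbol `χ(·/2^j)` of `S_j`, as a Schwartz function. -/
def lowCutoff (hχ : IsLPCutoff χ) (j : ℤ) : 𝓢(EuclideanSpace ℝ (Fin n), ℂ) :=
  HasCompactSupport.toSchwartzMap (f := fun ξ => ((χ ((2 : ℝ) ^ (-j) • ξ) : ℝ) : ℂ))
    ((hχ.2.1.comp_smul (by positivity)).comp_left Complex.ofReal_zero)
    (Complex.ofRealCLM.contDiff.comp (hχ.1.comp (contDiff_const_smul _)))

/-- The symbol `φ̂(·/2^j) = χ(·/2^(j+1)) - χ(·/2^j)` of `Δ_j`, as a Schwartz function. -/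
def bandCutoff (hχ : IsLPCutoff χ) (j : ℤ) : 𝓢(EuclideanSpace ℝ (Fin n), ℂ) :=
  hχ.lowCutoff (j + 1) - hχ.lowCutoff j

theorem lowCutoff_apply (hχ : IsLPCutoff χ) (j : ℤ) (ξ : EuclideanSpace ℝ (Fin n)) :
    hχ.lowCutoff j ξ = χ ((2 : ℝ) ^ (-j) • ξ) := rfl

theorem bandCutoff_apply (hχ : IsLPCutoff χ) (j : ℤ) (ξ : EuclideanSpace ℝ (Fin n)) :
    hχ.bandCutoff j ξ = (χ ((2 : ℝ) ^ (-(j + 1)) • ξ) - χ ((2 : ℝ) ^ (-j) • ξ) : ℝ) := by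
  simp [bandCutoff, lowCutoff_apply]

theorem lowCutoff_eq_zero_comp_smul (hχ : IsLPCutoff χ) (j : ℤ) :
    ⇑(hχ.lowCutoff j) = fun ξ => hχ.lowCutoff 0 ((2 : ℝ) ^ (-j) • ξ) := by
  ext ξ
  simp [lowCutoff_apply]

theorem bandCutoff_eq_zero_comp_smul (hχ : IsLPCutoff χ) (j : ℤ) :
    ⇑(hχ.bandCutoff j) = fun ξ => hχ.bandCutoff 0 ((2 : ℝ) ^ (-j) • ξ) := by
  ext ξ
  simp only [bandCutoff_apply, smul_smul, ← zpow_add₀ (two_ne_zero (α := ℝ))]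
  congr 4 <;> ring_nf

theorem enorm_lowCutoff_le_one (hχ : IsLPCutoff χ) (j : ℤ) (ξ : EuclideanSpace ℝ (Fin n)) :
    ‖hχ.lowCutoff j ξ‖ₑ ≤ 1 := by
  rw [← ofReal_norm, ENNReal.ofReal_le_one, lowCutoff_apply, Complex.norm_real,
    Real.norm_of_nonneg (hχ.nonneg _)]
  exact hχ.le_one _

theorem enorm_bandCutoff_le_one (hχ : IsLPCutoff χ) (j : ℤ) (ξ : EuclideanSpace ℝ (Fin n)) :
    ‖hχ.bandCutoff j ξ‖ₑ ≤ 1 := by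
  rw [← ofReal_norm, ENNReal.ofReal_le_one, bandCutoff_apply, Complex.norm_real]
  exact abs_sub_le_of_nonneg_of_le (hχ.nonneg _) (hχ.le_one _) (hχ.nonneg _) (hχ.le_one _)

theorem lowCutoff_eq_one (hχ : IsLPCutoff χ) {j : ℤ} {ξ : EuclideanSpace ℝ (Fin n)}
    (hξ : ‖ξ‖ ≤ 3 / 4 * 2 ^ j) : hχ.lowCutoff j ξ = 1 := by
  rw [lowCutoff_apply, hχ.eq_one, Complex.ofReal_one]
  rwa [norm_smul, Real.norm_of_nonneg (by positivity), zpow_neg, inv_mul_le_iff₀' (by positivity)]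

theorem lowCutoff_eq_zero (hχ : IsLPCutoff χ) {j : ℤ} {ξ : EuclideanSpace ℝ (Fin n)}
    (hξ : 4 / 3 * 2 ^ j < ‖ξ‖) : hχ.lowCutoff j ξ = 0 := by
  rw [lowCutoff_apply, hχ.eq_zero, Complex.ofReal_zero]
  rwa [norm_smul, Real.norm_of_nonneg (by positivity), zpow_neg, lt_inv_mul_iff₀' (by positivity)]

theorem norm_le_of_lowCutoff_ne_zero (hχ : IsLPCutoff χ) {j : ℤ} {ξ : EuclideanSpace ℝ (Fin n)}
    (h : hχ.lowCutoff j ξ ≠ 0) : ‖ξ‖ ≤ 4 / 3 * 2 ^ j :=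
  not_lt.1 (mt hχ.lowCutoff_eq_zero h)

theorem norm_bounds_of_bandCutoff_ne_zero (hχ : IsLPCutoff χ) {j : ℤ}
    {ξ : EuclideanSpace ℝ (Fin n)} (h : hχ.bandCutoff j ξ ≠ 0) :
    3 / 4 * 2 ^ j ≤ ‖ξ‖ ∧ ‖ξ‖ ≤ 8 / 3 * 2 ^ j := by
  have hpos : (0 : ℝ) < 2 ^ j := by positivity
  have hsucc : (2 : ℝ) ^ (j + 1) = 2 ^ j * 2 := zpow_add_one₀ two_ne_zero j
  contrapose! h
  rcases lt_or_ge ‖ξ‖ (3 / 4 * 2 ^ j) with hlt | hge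
  · rw [bandCutoff, sub_apply, hχ.lowCutoff_eq_one (by linarith), hχ.lowCutoff_eq_one hlt.le,
      sub_self]
  · have hgt := h hge
    rw [bandCutoff, sub_apply, hχ.lowCutoff_eq_zero (by linarith),
      hχ.lowCutoff_eq_zero (by linarith), sub_self]

theorem support_bandCutoff_subset (hχ : IsLPCutoff χ) (j : ℤ) :
    support (hχ.bandCutoff j) ⊆ dyadicAnnulus _ 2 j := by
  intro ξ hξ
  have hpos : (0 : ℝ) < 2 ^ j := by positivity
  obtain ⟨hlower, hupper⟩ := hχ.norm_bounds_of_bandCutoff_ne_zero hξ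
  constructor
  · rw [zpow_sub₀ two_ne_zero]
    linarith
  · rw [zpow_add₀ two_ne_zero]
    linarith

theorem tsum_enorm_bandCutoff_le (hχ : IsLPCutoff χ) (ξ : EuclideanSpace ℝ (Fin n)) :
    ∑' k : ℤ, ‖hχ.bandCutoff k ξ‖ₑ ≤ 9 := by
  by_cases hξ : ∀ k, hχ.bandCutoff k ξ = 0
  · simp [hξ]
  push Not at hξ
  obtain ⟨j, hj⟩ := hξ
  have hvanish : ∀ k ∉ Finset.Icc (j - (2 + 2)) (j + (2 + 2)), ‖hχ.bandCutoff k ξ‖ₑ = 0 := by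
    intro k hk
    by_contra hne
    exact hk (mem_Icc_of_mem_dyadicAnnulus (hχ.support_bandCutoff_subset j hj)
      (hχ.support_bandCutoff_subset k (enorm_ne_zero.1 hne)))
  calc ∑' k : ℤ, ‖hχ.bandCutoff k ξ‖ₑ
      = ∑ k ∈ Finset.Icc (j - (2 + 2)) (j + (2 + 2)), ‖hχ.bandCutoff k ξ‖ₑ := tsum_eq_sum hvanish
    _ ≤ (Finset.Icc (j - (2 + 2)) (j + (2 + 2))).card • 1 :=
        Finset.sum_le_card_nsmul _ _ _ fun k _ => hχ.enorm_bandCutoff_le_one k ξ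
    _ = 9 := by
        rw [Int.card_Icc, show (j + (2 + 2) + 1 - (j - (2 + 2))).toNat = 9 by omega]
        norm_num

theorem tsum_eLpNorm_bandCutoff_mul_ne_top (hχ : IsLPCutoff χ)
    {u : EuclideanSpace ℝ (Fin n) → ℂ} (hu : Integrable u) :
    ∑' k, eLpNorm (fun ξ => hχ.bandCutoff k ξ * u ξ) 1 volume ≠ ∞ := by
  simp only [eLpNorm_one_eq_lintegral_enorm, enorm_mul]
  have hmeas (k : ℤ) : AEMeasurable fun ξ => ‖hχ.bandCutoff k ξ‖ₑ * ‖u ξ‖ₑ :=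
    (hχ.bandCutoff k).continuous.aestronglyMeasurable.enorm.mul hu.1.enorm
  rw [← lintegral_tsum hmeas]
  refine ne_top_of_le_ne_top (ENNReal.mul_ne_top (ENNReal.natCast_ne_top 9) hu.2.ne) ?_
  calc ∫⁻ ξ, ∑' k, ‖hχ.bandCutoff k ξ‖ₑ * ‖u ξ‖ₑ
      ≤ ∫⁻ ξ, 9 * ‖u ξ‖ₑ := lintegral_mono fun ξ => by
        rw [ENNReal.tsum_mul_right]
        gcongr
        exact hχ.tsum_enorm_bandCutoff_le ξ
    _ = 9 * ∫⁻ ξ, ‖u ξ‖ₑ := lintegral_const_mul' _ _ (by simp)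

end IsLPCutoff

end Cutoffs

section Projections

variable {n : ℕ} {χ : EuclideanSpace ℝ (Fin n) → ℝ}

theorem Dproj_eq_fourierInv (hχ : IsLPCutoff χ) (j : ℤ) (f : EuclideanSpace ℝ (Fin n) → ℂ) :
    Dproj χ j f = 𝓕⁻ fun ξ => hχ.bandCutoff j ξ * 𝓕 f ξ := by
  simp_rw [hχ.bandCutoff_apply]
  rfl

theorem Dproj_eq_fourierMultiplierCLM (hχ : IsLPCutoff χ) (j : ℤ)
    (f : 𝓢(EuclideanSpace ℝ (Fin n), ℂ)) :
    Dproj χ j f = SchwartzMap.fourierMultiplierCLM ℂ (hχ.bandCutoff j) f := by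
  rw [coe_fourierMultiplierCLM, Dproj_eq_fourierInv hχ]
  rfl

theorem Sproj_eq_fourierMultiplierCLM (hχ : IsLPCutoff χ) (j : ℤ)
    (f : 𝓢(EuclideanSpace ℝ (Fin n), ℂ)) :
    Sproj χ j f = SchwartzMap.fourierMultiplierCLM ℂ (hχ.lowCutoff j) f := by
  rw [coe_fourierMultiplierCLM]
  rfl

theorem continuous_Dproj (hχ : IsLPCutoff χ) (j : ℤ) (f : 𝓢(EuclideanSpace ℝ (Fin n), ℂ)) :
    Continuous (Dproj χ j f) := by
  rw [Dproj_eq_fourierMultiplierCLM hχ]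
  exact SchwartzMap.continuous _

theorem continuous_Sproj (hχ : IsLPCutoff χ) (j : ℤ) (f : 𝓢(EuclideanSpace ℝ (Fin n), ℂ)) :
    Continuous (Sproj χ j f) := by
  rw [Sproj_eq_fourierMultiplierCLM hχ]
  exact SchwartzMap.continuous _

theorem eLpNorm_Dproj_le (hχ : IsLPCutoff χ) (j : ℤ) (f : 𝓢(EuclideanSpace ℝ (Fin n), ℂ))
    {p : ℝ≥0∞} (hp : 1 ≤ p) :
    eLpNorm (Dproj χ j f) p volume
      ≤ eLpNorm (𝓕⁻ ⇑(hχ.bandCutoff 0)) 1 volume * eLpNorm f p volume := by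
  rw [← eLpNorm_one_fourierInv_comp_smul _ (r := (2 : ℝ) ^ (-j)) (by positivity),
    ← hχ.bandCutoff_eq_zero_comp_smul, Dproj_eq_fourierMultiplierCLM hχ]
  exact eLpNorm_fourierMultiplierCLM_le _ f hp

theorem eLpNorm_Sproj_le (hχ : IsLPCutoff χ) (j : ℤ) (f : 𝓢(EuclideanSpace ℝ (Fin n), ℂ))
    {p : ℝ≥0∞} (hp : 1 ≤ p) :
    eLpNorm (Sproj χ j f) p volume
      ≤ eLpNorm (𝓕⁻ ⇑(hχ.lowCutoff 0)) 1 volume * eLpNorm f p volume := by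
  rw [← eLpNorm_one_fourierInv_comp_smul _ (r := (2 : ℝ) ^ (-j)) (by positivity),
    ← hχ.lowCutoff_eq_zero_comp_smul, Sproj_eq_fourierMultiplierCLM hχ]
  exact eLpNorm_fourierMultiplierCLM_le _ f hp

theorem enorm_Sproj_le (hχ : IsLPCutoff χ) (j : ℤ) (f : EuclideanSpace ℝ (Fin n) → ℂ)
    (x : EuclideanSpace ℝ (Fin n)) : ‖Sproj χ j f x‖ₑ ≤ eLpNorm (𝓕 f) 1 volume := by
  refine (enorm_fourierInv_le _ x).trans (eLpNorm_mono_enorm fun ξ => ?_)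
  rw [enorm_mul]
  exact mul_le_of_le_one_left' (hχ.enorm_lowCutoff_le_one j ξ)

theorem tsum_iSup_enorm_Dproj_ne_top (hχ : IsLPCutoff χ) {f : EuclideanSpace ℝ (Fin n) → ℂ}
    (hf : Integrable (𝓕 f)) : ∑' k, ⨆ x, ‖Dproj χ k f x‖ₑ ≠ ∞ := by
  refine ne_top_of_le_ne_top (hχ.tsum_eLpNorm_bandCutoff_mul_ne_top hf)
    (ENNReal.tsum_le_tsum fun k => iSup_le fun x => ?_)
  rw [Dproj_eq_fourierInv hχ]
  exact enorm_fourierInv_le _ x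

theorem Dproj_eq_Sproj_sub (hχ : IsLPCutoff χ) (j : ℤ) (f : 𝓢(EuclideanSpace ℝ (Fin n), ℂ)) :
    Dproj χ j f = Sproj χ (j + 1) f - Sproj χ j f := by
  rw [Dproj_eq_fourierMultiplierCLM hχ, Sproj_eq_fourierMultiplierCLM hχ,
    Sproj_eq_fourierMultiplierCLM hχ, IsLPCutoff.bandCutoff, fourierMultiplierCLM_sub]
  rfl

theorem sum_range_Dproj (hχ : IsLPCutoff χ) (k : ℤ) (f : 𝓢(EuclideanSpace ℝ (Fin n), ℂ)) (N : ℕ) :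
    ∑ m ∈ Finset.range N, Dproj χ (k - 1 - m) f = Sproj χ k f - Sproj χ (k - N) f := by
  have hstep (m : ℕ) :
      Dproj χ (k - 1 - m) f = Sproj χ (k - m) f - Sproj χ (k - (m + 1 : ℕ)) f := by
    rw [Dproj_eq_Sproj_sub hχ]
    congr 2 <;> push_cast <;> ring
  simp_rw [hstep]
  simpa using Finset.sum_range_sub' (fun m : ℕ => Sproj χ (k - m) f) N

theorem eventually_lowCutoff_sub_eq_zero (hχ : IsLPCutoff χ) (k : ℤ)
    {ξ : EuclideanSpace ℝ (Fin n)} (hξ : ξ ≠ 0) :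
    ∀ᶠ N : ℕ in atTop, hχ.lowCutoff (k - N) ξ = 0 := by
  have hlim : Tendsto (fun N : ℕ => (4 / 3 : ℝ) * 2 ^ (k - (N : ℤ))) atTop (nhds 0) := by
    have hgeom := (tendsto_pow_atTop_nhds_zero_of_lt_one (r := (2 : ℝ)⁻¹) (by norm_num)
      (by norm_num)).const_mul (4 / 3 * 2 ^ k)
    simpa [zpow_sub₀, div_eq_mul_inv, mul_assoc] using hgeom
  filter_upwards [hlim.eventually (gt_mem_nhds (norm_pos_iff.2 hξ))] with N hN
  exact hχ.lowCutoff_eq_zero hN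

theorem tendsto_Sproj_sub_natCast [NeZero n] (hχ : IsLPCutoff χ) (k : ℤ)
    (f : 𝓢(EuclideanSpace ℝ (Fin n), ℂ)) (x : EuclideanSpace ℝ (Fin n)) :
    Tendsto (fun N : ℕ => Sproj χ (k - N) f x) atTop (nhds 0) := by
  have hint := integrable_fourier f
  have hL1 : Tendsto (fun N : ℕ => ∫⁻ ξ, ‖hχ.lowCutoff (k - N) ξ * 𝓕 ⇑f ξ‖ₑ) atTop (nhds 0) := by
    rw [← lintegral_zero (μ := (volume : Measure (EuclideanSpace ℝ (Fin n))))]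
    refine tendsto_lintegral_of_dominated_convergence' (fun ξ => ‖𝓕 ⇑f ξ‖ₑ)
      (fun N => ((hχ.lowCutoff _).continuous.aestronglyMeasurable.mul hint.1).enorm)
      (fun N => .of_forall fun ξ => ?_) hint.2.ne ?_
    · simp only [enorm_mul]
      exact mul_le_of_le_one_left' (hχ.enorm_lowCutoff_le_one _ ξ)
    · filter_upwards [volume.ae_ne 0] with ξ hξ
      exact tendsto_const_nhds.congr' ((eventually_lowCutoff_sub_eq_zero hχ k hξ).mono
        fun N hN => by simp [hN])
  rw [tendsto_zero_iff_enorm_tendsto_zero]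
  refine tendsto_of_tendsto_of_tendsto_of_le_of_le tendsto_const_nhds hL1 (fun _ => zero_le)
    fun N => ?_
  rw [← eLpNorm_one_eq_lintegral_enorm]
  exact enorm_fourierInv_le _ x

theorem eLpNorm_Sproj_le_tsum [NeZero n] (hχ : IsLPCutoff χ) (k : ℤ)
    (f : 𝓢(EuclideanSpace ℝ (Fin n), ℂ)) {p : ℝ≥0∞} (hp : 1 ≤ p) :
    eLpNorm (Sproj χ k f) p volume ≤ ∑' m : ℕ, eLpNorm (Dproj χ (k - 1 - m) f) p volume := by
  have hmeas (m : ℕ) : AEStronglyMeasurable (Dproj χ (k - 1 - m) f) volume :=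
    (continuous_Dproj hχ _ f).aestronglyMeasurable
  have hlim (x : EuclideanSpace ℝ (Fin n)) :
      Tendsto (fun N => (∑ m ∈ Finset.range N, Dproj χ (k - 1 - (m : ℤ)) f) x) atTop
        (nhds (Sproj χ k f x)) := by
    simp_rw [sum_range_Dproj hχ]
    simpa using (tendsto_Sproj_sub_natCast hχ k f x).const_sub (Sproj χ k f x)
  calc eLpNorm (Sproj χ k f) p volume
      ≤ liminf (fun N => eLpNorm (∑ m ∈ Finset.range N, Dproj χ (k - 1 - (m : ℤ)) f) p volume)
          atTop :=
        Lp.eLpNorm_lim_le_liminf_eLpNorm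
          (fun N => Finset.aestronglyMeasurable_sum _ fun m _ => hmeas m) _ (.of_forall hlim)
    _ ≤ liminf (fun _ : ℕ => ∑' m : ℕ, eLpNorm (Dproj χ (k - 1 - m) f) p volume) atTop :=
        liminf_le_liminf (.of_forall fun N =>
          (eLpNorm_sum_le (fun m _ => hmeas m) hp).trans (ENNReal.sum_le_tsum _))
    _ = ∑' m : ℕ, eLpNorm (Dproj χ (k - 1 - m) f) p volume := liminf_const _

end Projections

section UniformlySummableSeries

variable {ι X E A : Type*} [NormedAddCommGroup E] [CompleteSpace E] [NormedRing A]
  [NormedSpace ℝ A] [CompleteSpace A]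

theorem summable_apply_of_tsum_iSup_enorm_ne_top {u : ι → X → E}
    (hu : ∑' i, ⨆ x, ‖u i x‖ₑ ≠ ∞) (x : X) :
    Summable fun i => u i x :=
  .of_enorm (ne_top_of_le_ne_top hu (ENNReal.tsum_le_tsum fun i => le_iSup (‖u i ·‖ₑ) x))

theorem summable_integral_mul_of_tsum_iSup_enorm_ne_top [MeasurableSpace X] {μ : Measure X}
    {u : ι → X → A} (hu : ∑' i, ⨆ x, ‖u i x‖ₑ ≠ ∞) {g : X → A} (hg : Integrable g μ) :
    Summable fun i => ∫ x, u i x * g x ∂μ := by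
  refine .of_enorm (ne_top_of_le_ne_top (ENNReal.mul_ne_top hu hg.2.ne) ?_)
  rw [← ENNReal.tsum_mul_right]
  refine ENNReal.tsum_le_tsum fun i => ?_
  calc ‖∫ x, u i x * g x ∂μ‖ₑ
      ≤ ∫⁻ x, ‖u i x * g x‖ₑ ∂μ := enorm_integral_le_lintegral_enorm _
    _ ≤ ∫⁻ x, (⨆ x, ‖u i x‖ₑ) * ‖g x‖ₑ ∂μ := lintegral_mono fun x => by
        have submultiplicative : ‖u i x * g x‖ₑ ≤ ‖u i x‖ₑ * ‖g x‖ₑ := by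
          simp only [enorm_eq_nnnorm]
          exact_mod_cast nnnorm_mul_le (u i x) (g x)
        refine submultiplicative.trans ?_
        gcongr
        exact le_iSup (‖u i ·‖ₑ) x
    _ = (⨆ x, ‖u i x‖ₑ) * ∫⁻ x, ‖g x‖ₑ ∂μ := lintegral_const_mul'' _ hg.1.enorm

end UniformlySummableSeries

section DyadicWeights

theorem two_rpow_add (a b : ℝ) : (2 : ℝ≥0∞) ^ (a + b) = 2 ^ a * 2 ^ b :=
  ENNReal.rpow_add _ _ two_ne_zero ENNReal.ofNat_ne_top

theorem two_rpow_lt_top (a : ℝ) : (2 : ℝ≥0∞) ^ a < ∞ :=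
  (ENNReal.rpow_ne_top_of_ne_zero two_ne_zero ENNReal.ofNat_ne_top).lt_top

theorem tsum_two_rpow_neg_lt_top {β : ℝ} (hβ : 0 < β) :
    ∑' m : ℕ, (2 : ℝ≥0∞) ^ (-((m + 2) * β)) < ∞ := by
  have geometric (m : ℕ) : (2 : ℝ≥0∞) ^ (-((m + 2) * β)) = 2 ^ (-(2 * β)) * (2 ^ (-β)) ^ m := by
    rw [← ENNReal.rpow_natCast, ← ENNReal.rpow_mul, ← two_rpow_add]
    ring_nf
  simp_rw [geometric, ENNReal.tsum_mul_left]
  refine ENNReal.mul_lt_top (two_rpow_lt_top _) ?_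
  rw [ENNReal.tsum_geometric, ENNReal.inv_lt_top]
  exact tsub_pos_of_lt (ENNReal.rpow_lt_one_of_one_lt_of_neg ENNReal.one_lt_two (by linarith))

end DyadicWeights

section BesovEstimates

variable {n : ℕ} {χ : EuclideanSpace ℝ (Fin n) → ℝ}

theorem Dproj_tsum_eq_Dproj_sum (hχ : IsLPCutoff χ) {d : ℤ}
    {u : ℤ → 𝓢(EuclideanSpace ℝ (Fin n), ℂ)}
    (hspec : ∀ k, support (𝓕 ⇑(u k)) ⊆ dyadicAnnulus _ d k)
    (hsum : ∑' k, eLpNorm (u k) 1 volume ≠ ∞) (j : ℤ) :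
    Dproj χ j (fun x => ∑' k, u k x)
      = Dproj χ j ⇑(∑ l ∈ Finset.Icc (-(2 + d)) (2 + d), u (j - l)) := by
  rw [Dproj_eq_fourierInv hχ, Dproj_eq_fourierInv hχ]
  congr 1 with ξ
  by_cases hξ : hχ.bandCutoff j ξ = 0
  · rw [hξ, zero_mul, zero_mul]
  have hvanish : ∀ l ∉ Finset.Icc (-(2 + d)) (2 + d), 𝓕 ⇑(u (j - l)) ξ = 0 := by
    intro l hl
    by_contra hne
    have hmem := mem_Icc_of_mem_dyadicAnnulus (hχ.support_bandCutoff_subset j hξ)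
      (hspec (j - l) hne)
    rw [Finset.mem_Icc] at hl hmem
    omega
  rw [fourier_tsum (fun k => (u k).continuous.aestronglyMeasurable) hsum,
    ← (Equiv.subLeft j).tsum_eq]
  simp only [Equiv.subLeft_apply]
  rw [tsum_eq_sum hvanish, ← SchwartzMap.fourier_coe, FourierTransform.fourier_sum, sum_apply]
  simp only [SchwartzMap.fourier_coe]

theorem eLpNorm_Dproj_tsum_le (hχ : IsLPCutoff χ) {d : ℤ}
    {u : ℤ → 𝓢(EuclideanSpace ℝ (Fin n), ℂ)}
    (hspec : ∀ k, support (𝓕 ⇑(u k)) ⊆ dyadicAnnulus _ d k)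
    (hsum : ∑' k, eLpNorm (u k) 1 volume ≠ ∞) {p : ℝ≥0∞} (hp : 1 ≤ p) (j : ℤ) :
    eLpNorm (Dproj χ j fun x => ∑' k, u k x) p volume
      ≤ eLpNorm (𝓕⁻ ⇑(hχ.bandCutoff 0)) 1 volume
        * ∑ l ∈ Finset.Icc (-(2 + d)) (2 + d), eLpNorm (u (j - l)) p volume := by
  rw [Dproj_tsum_eq_Dproj_sum hχ hspec hsum]
  refine (eLpNorm_Dproj_le hχ j _ hp).trans ?_
  gcongr
  rw [FunLike.coe_sum]
  exact eLpNorm_sum_le (fun l _ => (u (j - l)).continuous.aestronglyMeasurable) hp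

theorem besovNorm_tsum_le (hχ : IsLPCutoff χ) {d : ℤ} {u : ℤ → 𝓢(EuclideanSpace ℝ (Fin n), ℂ)}
    (hspec : ∀ k, support (𝓕 ⇑(u k)) ⊆ dyadicAnnulus _ d k)
    (hsum : ∑' k, eLpNorm (u k) 1 volume ≠ ∞) (s : ℝ) {p q : ℝ≥0∞} (hp : 1 ≤ p) (hq : 1 ≤ q) :
    besovNorm χ s p q (fun x => ∑' k, u k x)
      ≤ eLpNorm (𝓕⁻ ⇑(hχ.bandCutoff 0)) 1 volume
        * (∑ l ∈ Finset.Icc (-(2 + d)) (2 + d), (2 : ℝ≥0∞) ^ ((l : ℝ) * s))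
        * lqNorm q fun k => (2 : ℝ≥0∞) ^ ((k : ℝ) * s) * eLpNorm (u k) p volume := by
  set I := Finset.Icc (-(2 + d)) (2 + d)
  set M := eLpNorm (𝓕⁻ ⇑(hχ.bandCutoff 0)) 1 volume
  set a : ℤ → ℝ≥0∞ := fun k => (2 : ℝ≥0∞) ^ ((k : ℝ) * s) * eLpNorm (u k) p volume
  have weight (j l : ℤ) :
      (2 : ℝ≥0∞) ^ ((j : ℝ) * s) = 2 ^ ((l : ℝ) * s) * 2 ^ (((j - l : ℤ) : ℝ) * s) := by
    rw [← two_rpow_add, ← add_mul]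
    push_cast
    ring_nf
  have block (j : ℤ) :
      (2 : ℝ≥0∞) ^ ((j : ℝ) * s) * eLpNorm (Dproj χ j fun x => ∑' k, u k x) p volume
        ≤ M * ∑' l : I, (2 : ℝ≥0∞) ^ ((l : ℝ) * s) * a (j - l) :=
    calc (2 : ℝ≥0∞) ^ ((j : ℝ) * s) * eLpNorm (Dproj χ j fun x => ∑' k, u k x) p volume
        ≤ 2 ^ ((j : ℝ) * s) * (M * ∑ l ∈ I, eLpNorm (u (j - l)) p volume) := by
          gcongr
          exact eLpNorm_Dproj_tsum_le hχ hspec hsum hp j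
      _ = M * ∑ l ∈ I, (2 : ℝ≥0∞) ^ ((l : ℝ) * s) * a (j - l) := by
          rw [mul_left_comm, Finset.mul_sum]
          exact congrArg _ (Finset.sum_congr rfl fun l _ => by rw [weight j l, mul_assoc])
      _ = M * ∑' l : I, (2 : ℝ≥0∞) ^ ((l : ℝ) * s) * a (j - l) := by
          rw [Finset.tsum_subtype I fun l => (2 : ℝ≥0∞) ^ ((l : ℝ) * s) * a (j - l)]
  calc besovNorm χ s p q (fun x => ∑' k, u k x)
      ≤ M * lqNorm q (fun j => ∑' l : I, (2 : ℝ≥0∞) ^ ((l : ℝ) * s) * a (j - l)) := by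
        rw [← lqNorm_const_mul (zero_lt_one.trans_le hq).ne']
        exact lqNorm_mono block
    _ ≤ M * ((∑' l : I, (2 : ℝ≥0∞) ^ ((l : ℝ) * s)) * lqNorm q a) := by
        gcongr
        exact lqNorm_tsum_mul_shift_le hq _ (fun l : I => (l : ℤ)) a
    _ = M * (∑ l ∈ I, (2 : ℝ≥0∞) ^ ((l : ℝ) * s)) * lqNorm q a := by
        rw [Finset.tsum_subtype I fun l : ℤ => (2 : ℝ≥0∞) ^ ((l : ℝ) * s), mul_assoc]

theorem lqNorm_Sproj_le [NeZero n] (hχ : IsLPCutoff χ) (β : ℝ)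
    (f : 𝓢(EuclideanSpace ℝ (Fin n), ℂ)) {p q : ℝ≥0∞} (hp : 1 ≤ p) (hq : 1 ≤ q) :
    lqNorm q (fun k => (2 : ℝ≥0∞) ^ ((k : ℝ) * -β) * eLpNorm (Sproj χ (k - 1) f) p volume)
      ≤ (∑' m : ℕ, (2 : ℝ≥0∞) ^ (-((m + 2) * β))) * besovNorm χ (-β) p q f := by
  refine (lqNorm_mono fun k => ?_).trans
    (lqNorm_tsum_mul_shift_le hq _ (fun m : ℕ => (m : ℤ) + 2) _)
  have weight (m : ℕ) : (2 : ℝ≥0∞) ^ ((k : ℝ) * -β)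
      = 2 ^ (-((m + 2) * β)) * 2 ^ (((k - (m + 2) : ℤ) : ℝ) * -β) := by
    rw [← two_rpow_add]
    push_cast
    ring_nf
  calc (2 : ℝ≥0∞) ^ ((k : ℝ) * -β) * eLpNorm (Sproj χ (k - 1) f) p volume
      ≤ 2 ^ ((k : ℝ) * -β) * ∑' m : ℕ, eLpNorm (Dproj χ (k - 1 - 1 - m) f) p volume := by
        gcongr
        exact eLpNorm_Sproj_le_tsum hχ (k - 1) f hp
    _ = _ := by
        rw [← ENNReal.tsum_mul_left]
        refine tsum_congr fun m => ?_
        rw [weight m, mul_assoc, show k - 1 - 1 - (m : ℤ) = k - (m + 2) by ring]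

end BesovEstimates

section Paraproduct

variable {n : ℕ} {χ : EuclideanSpace ℝ (Fin n) → ℝ}

/-- The term `(Δ_k f₂)(S_{k-1} f₁)` of the paraproduct `T_{f₁} f₂`, as a Schwartz function. -/
def paraproductTerm (hχ : IsLPCutoff χ) (f₁ f₂ : 𝓢(EuclideanSpace ℝ (Fin n), ℂ)) (k : ℤ) :
    𝓢(EuclideanSpace ℝ (Fin n), ℂ) :=
  SchwartzMap.pairing (ContinuousLinearMap.mul ℂ ℂ)
    (SchwartzMap.fourierMultiplierCLM ℂ (hχ.bandCutoff k) f₂)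
    (SchwartzMap.fourierMultiplierCLM ℂ (hχ.lowCutoff (k - 1)) f₁)

variable (hχ : IsLPCutoff χ) (f₁ f₂ : 𝓢(EuclideanSpace ℝ (Fin n), ℂ))

theorem paraproductTerm_apply (k : ℤ) (x : EuclideanSpace ℝ (Fin n)) :
    paraproductTerm hχ f₁ f₂ k x = Dproj χ k f₂ x * Sproj χ (k - 1) f₁ x := by
  rw [Dproj_eq_fourierMultiplierCLM hχ, Sproj_eq_fourierMultiplierCLM hχ]
  rfl

theorem support_fourier_paraproductTerm_subset (k : ℤ) :
    support (𝓕 ⇑(paraproductTerm hχ f₁ f₂ k)) ⊆ dyadicAnnulus _ 4 k := by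
  intro ξ hξ
  obtain ⟨a, ha, b, hb, rfl⟩ := support_fourier_pairing_subset _ _ _ hξ
  rw [mem_support, fourier_fourierMultiplierCLM] at ha hb
  obtain ⟨ha_lower, ha_upper⟩ := hχ.norm_bounds_of_bandCutoff_ne_zero (left_ne_zero_of_smul ha)
  have hb_upper := hχ.norm_le_of_lowCutoff_ne_zero (left_ne_zero_of_smul hb)
  have hpos : (0 : ℝ) < 2 ^ k := by positivity
  rw [zpow_sub_one₀ two_ne_zero] at hb_upper
  constructor
  · have htriangle := norm_le_norm_add_norm_sub' a (a + b)
    rw [zpow_sub₀ two_ne_zero]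
    rw [sub_add_cancel_left, norm_neg] at htriangle
    linarith
  · have htriangle := norm_add_le a b
    rw [zpow_add₀ two_ne_zero]
    linarith

theorem tsum_iSup_enorm_paraproductTerm_ne_top :
    ∑' k, ⨆ x, ‖paraproductTerm hχ f₁ f₂ k x‖ₑ ≠ ∞ := by
  refine ne_top_of_le_ne_top (ENNReal.mul_ne_top
    (tsum_iSup_enorm_Dproj_ne_top hχ (integrable_fourier f₂))
    (memLp_one_iff_integrable.2 (integrable_fourier f₁)).eLpNorm_ne_top) ?_
  rw [← ENNReal.tsum_mul_right]
  refine ENNReal.tsum_le_tsum fun k => iSup_le fun x => ?_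
  rw [paraproductTerm_apply, enorm_mul]
  gcongr
  · exact le_iSup (‖Dproj χ k f₂ ·‖ₑ) x
  · exact enorm_Sproj_le hχ _ _ x

theorem tsum_eLpNorm_one_paraproductTerm_ne_top :
    ∑' k, eLpNorm (paraproductTerm hχ f₁ f₂ k) 1 volume ≠ ∞ := by
  refine ne_top_of_le_ne_top (ENNReal.mul_ne_top
    (tsum_iSup_enorm_Dproj_ne_top hχ (integrable_fourier f₂)) (ENNReal.mul_ne_top
      (memLp_one_iff_integrable.2 (integrable_fourierInv (hχ.lowCutoff 0))).eLpNorm_ne_top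
      (f₁.memLp 1).eLpNorm_ne_top)) ?_
  rw [← ENNReal.tsum_mul_right]
  refine ENNReal.tsum_le_tsum fun k => ?_
  calc eLpNorm (paraproductTerm hχ f₁ f₂ k) 1 volume
      ≤ (⨆ x, ‖Dproj χ k f₂ x‖ₑ) * eLpNorm (Sproj χ (k - 1) f₁) 1 volume := by
        refine eLpNorm_le_mul_eLpNorm_of_ae_le_mul'' _
          (continuous_Sproj hχ _ f₁).aestronglyMeasurable (.of_forall fun x => ?_)
        rw [paraproductTerm_apply, enorm_mul]
        gcongr
        exact le_iSup (‖Dproj χ k f₂ ·‖ₑ) x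
    _ ≤ _ := by
        gcongr
        exact eLpNorm_Sproj_le hχ _ f₁ le_rfl

theorem eLpNorm_paraproductTerm_le {p p₃ p₄ : ℝ≥0∞} [ENNReal.HolderTriple p₃ p₄ p] (k : ℤ) :
    eLpNorm (paraproductTerm hχ f₁ f₂ k) p volume
      ≤ eLpNorm (Sproj χ (k - 1) f₁) p₃ volume * eLpNorm (Dproj χ k f₂) p₄ volume := by
  have hterm : ⇑(paraproductTerm hχ f₁ f₂ k) = Sproj χ (k - 1) f₁ • Dproj χ k f₂ := by
    ext x
    rw [paraproductTerm_apply, mul_comm]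
    rfl
  rw [hterm]
  exact eLpNorm_smul_le_mul_eLpNorm (continuous_Dproj hχ _ f₂).aestronglyMeasurable
    (continuous_Sproj hχ _ f₁).aestronglyMeasurable

theorem lqNorm_paraproductTerm_le [NeZero n] (s β : ℝ) {p q p₃ p₄ q₃ q₄ : ℝ≥0∞}
    [ENNReal.HolderTriple p₃ p₄ p] [ENNReal.HolderTriple q₃ q₄ q] (hp : 1 ≤ p) (hq : 1 ≤ q) :
    lqNorm q (fun k => (2 : ℝ≥0∞) ^ ((k : ℝ) * s) * eLpNorm (paraproductTerm hχ f₁ f₂ k) p volume)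
      ≤ (∑' m : ℕ, (2 : ℝ≥0∞) ^ (-((m + 2) * β)))
        * (besovNorm χ (-β) p₃ q₃ f₁ * besovNorm χ (s + β) p₄ q₄ f₂) := by
  have hp₃ : 1 ≤ p₃ := hp.trans (ENNReal.HolderTriple.le p₃ p₄ p)
  have hq₃ : 1 ≤ q₃ := hq.trans (ENNReal.HolderTriple.le q₃ q₄ q)
  have weight (k : ℤ) :
      (2 : ℝ≥0∞) ^ ((k : ℝ) * s) = 2 ^ ((k : ℝ) * -β) * 2 ^ ((k : ℝ) * (s + β)) := by
    rw [← two_rpow_add]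
    ring_nf
  calc lqNorm q
        (fun k => (2 : ℝ≥0∞) ^ ((k : ℝ) * s) * eLpNorm (paraproductTerm hχ f₁ f₂ k) p volume)
      ≤ lqNorm q (fun k =>
          ((2 : ℝ≥0∞) ^ ((k : ℝ) * -β) * eLpNorm (Sproj χ (k - 1) f₁) p₃ volume)
            * ((2 : ℝ≥0∞) ^ ((k : ℝ) * (s + β)) * eLpNorm (Dproj χ k f₂) p₄ volume)) :=
        lqNorm_mono fun k => by
          rw [weight k, mul_mul_mul_comm]
          gcongr
          exact eLpNorm_paraproductTerm_le hχ f₁ f₂ k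
    _ ≤ lqNorm q₃ (fun k =>
          (2 : ℝ≥0∞) ^ ((k : ℝ) * -β) * eLpNorm (Sproj χ (k - 1) f₁) p₃ volume)
            * besovNorm χ (s + β) p₄ q₄ f₂ :=
        lqNorm_mul_le (zero_lt_one.trans_le hq).ne' _ _
    _ ≤ _ := by
        rw [← mul_assoc]
        gcongr
        exact lqNorm_Sproj_le hχ β f₁ hp₃ hq₃

end Paraproduct

theorem paraproduct_estimate'_general
    (n : ℕ) (hn : 1 ≤ n) (χ : EuclideanSpace ℝ (Fin n) → ℝ) (hχ : IsLPCutoff χ)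
    (s β : ℝ) (hβ : 0 < β) (p q p₃ p₄ q₃ q₄ : ℝ≥0∞) [ENNReal.HolderTriple p₃ p₄ p]
    [ENNReal.HolderTriple q₃ q₄ q] (hp : 1 ≤ p) (hq : 1 ≤ q) :
    ∃ C : ℝ≥0∞, 0 < C ∧ C < ∞ ∧
      ∀ f₁ f₂ : 𝓢(EuclideanSpace ℝ (Fin n), ℂ),
        (∀ x, Summable fun k : ℤ => Dproj χ k f₂ x * Sproj χ (k - 1) f₁ x) ∧
        (∀ g : 𝓢(EuclideanSpace ℝ (Fin n), ℂ),
          Summable fun k : ℤ => ∫ x, Dproj χ k f₂ x * Sproj χ (k - 1) f₁ x * g x) ∧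
        besovNorm χ s p q (fun x => ∑' k : ℤ, Dproj χ k f₂ x * Sproj χ (k - 1) f₁ x) ≤
          C * (besovNorm χ (-β) p₃ q₃ f₁ * besovNorm χ (s + β) p₄ q₄ f₂) := by
  have : NeZero n := ⟨by omega⟩
  set M := eLpNorm (𝓕⁻ ⇑(hχ.bandCutoff 0)) 1 volume
  set W := ∑ l ∈ Finset.Icc (-(2 + 4) : ℤ) (2 + 4), (2 : ℝ≥0∞) ^ ((l : ℝ) * s)
  set B := ∑' m : ℕ, (2 : ℝ≥0∞) ^ (-((m + 2) * β))
  have hM : M < ∞ :=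
    (memLp_one_iff_integrable.2 (integrable_fourierInv (hχ.bandCutoff 0))).eLpNorm_lt_top
  have hW : W < ∞ := ENNReal.sum_lt_top.2 fun l _ => two_rpow_lt_top _
  have hB : B < ∞ := tsum_two_rpow_neg_lt_top hβ
  refine ⟨M * W * B + 1, by simp, by finiteness, fun f₁ f₂ => ?_⟩
  have hsup := tsum_iSup_enorm_paraproductTerm_ne_top hχ f₁ f₂
  simp only [← paraproductTerm_apply hχ]
  refine ⟨summable_apply_of_tsum_iSup_enorm_ne_top hsup,
    fun g => summable_integral_mul_of_tsum_iSup_enorm_ne_top hsup g.integrable, ?_⟩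
  calc besovNorm χ s p q (fun x => ∑' k, paraproductTerm hχ f₁ f₂ k x)
      ≤ M * W * (B * (besovNorm χ (-β) p₃ q₃ f₁ * besovNorm χ (s + β) p₄ q₄ f₂)) :=
        (besovNorm_tsum_le hχ (support_fourier_paraproductTerm_subset hχ f₁ f₂)
          (tsum_eLpNorm_one_paraproductTerm_ne_top hχ f₁ f₂) s hp hq).trans <| by
            gcongr
            exact lqNorm_paraproductTerm_le hχ f₁ f₂ s β hp hq
    _ ≤ _ := by
        rw [← mul_assoc]
        gcongr
        exact le_self_add

/-- **Para-product estimate** `‖T_{f₁} f₂‖_{Ḃ^s_{p,q}} ≤ C ‖f₁‖_{Ḃ^{-β}_{p₃,q₃}}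
‖f₂‖_{Ḃ^{s+β}_{p₄,q₄}}`: the series `T_{f₁} f₂ = Σ_{k∈ℤ} (Δ_k f₂)(S_{k-1} f₁)` converges
in the space of tempered distributions (pointwise, and when paired against any Schwartz
test function), and its sum obeys the stated Besov bound; the constant `C` depends only
on `n`, `χ`, `s`, `β` and the indices. -/
theorem paraproduct_estimate'
    (n : ℕ) (hn : 1 ≤ n) (χ : EuclideanSpace ℝ (Fin n) → ℝ) (hχ : IsLPCutoff χ)
    (s β : ℝ) (hs : 0 < s) (hβ : 0 < β)
    (p q p₃ p₄ q₃ q₄ : ℝ≥0∞)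
    (hp : 1 ≤ p) (hq : 1 ≤ q) (hp₃ : 1 ≤ p₃) (hp₄ : 1 ≤ p₄) (hq₃ : 1 ≤ q₃) (hq₄ : 1 ≤ q₄)
    (hp34 : 1 / p = 1 / p₃ + 1 / p₄) (hq34 : 1 / q = 1 / q₃ + 1 / q₄) :
    ∃ C : ℝ≥0∞, 0 < C ∧ C < ∞ ∧
      ∀ f₁ f₂ : 𝓢(EuclideanSpace ℝ (Fin n), ℂ),
        (∀ x, Summable fun k : ℤ => Dproj χ k (⇑f₂) x * Sproj χ (k - 1) (⇑f₁) x) ∧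
        (∀ g : 𝓢(EuclideanSpace ℝ (Fin n), ℂ),
          Summable fun k : ℤ => ∫ x, Dproj χ k (⇑f₂) x * Sproj χ (k - 1) (⇑f₁) x * g x) ∧
        besovNorm χ s p q (fun x => ∑' k : ℤ, Dproj χ k (⇑f₂) x * Sproj χ (k - 1) (⇑f₁) x) ≤
          C * (besovNorm χ (-β) p₃ q₃ ⇑f₁ * besovNorm χ (s + β) p₄ q₄ ⇑f₂) := by
  have : ENNReal.HolderTriple p₃ p₄ p := ⟨by simpa using hp34.symm⟩
  have : ENNReal.HolderTriple q₃ q₄ q := ⟨by simpa using hq34.symm⟩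
  exact paraproduct_estimate'_general n hn χ hχ s β hβ p q p₃ p₄ q₃ q₄ hp hq
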